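/- Suppose that ξ_r(y_ℓ) = δ_{ℓr}·V for all ℓ, r ∈ {1, …, n}, where ξ_r := Σ_{m=0}^{n} ∂/∂x_r^m and δ is the Kronecker delta. Then the coefficients satisfy Σ_{i=1}^{n} A_{i,ir}^ℓ = (1/2)·δ_{ℓr} for all ℓ, r ∈ {1, …, n}. -/

import Mathlib

/-- The `(n+1) × (n+1)` matrix whose `j`-th column is `(x_1^j, …, x_n^j, 1)`,
with entries in the polynomial ring in the variables `x_i^j`
(a variable is a pair `(i, j) : Fin n × Fin (n+1)`, `i` the coordinate index, `j` the vertex index). -/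
noncomputable def Vmat (n : ℕ) : Matrix (Fin (n+1)) (Fin (n+1)) (MvPolynomial (Fin n × Fin (n+1)) ℝ) :=
  Matrix.of fun r c => if h : (r : ℕ) < n then MvPolynomial.X (⟨r, h⟩, c) else 1

/-- The basic determinant `V`. -/
noncomputable def Vpoly (n : ℕ) : MvPolynomial (Fin n × Fin (n+1)) ℝ := (Vmat n).det

/-- The matrix of `V` with its `i`-th row replaced by `(x_j^0 x_k^0, …, x_j^n x_k^n)`. -/
noncomputable def Xmat (n : ℕ) (i j k : Fin n) :
    Matrix (Fin (n+1)) (Fin (n+1)) (MvPolynomial (Fin n × Fin (n+1)) ℝ) :=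
  Matrix.of fun r c =>
    if (r : ℕ) = (i : ℕ) then MvPolynomial.X (j, c) * MvPolynomial.X (k, c)
    else if h : (r : ℕ) < n then MvPolynomial.X (⟨r, h⟩, c) else 1

/-- The basic determinant `X_{i,jk}`. -/
noncomputable def Xpoly (n : ℕ) (i j k : Fin n) : MvPolynomial (Fin n × Fin (n+1)) ℝ :=
  (Xmat n i j k).det


/-- The Kronecker delta. -/
def kron {n : ℕ} (a b : Fin n) : ℝ := if a = b then 1 else 0

/-- `y_ℓ = Σ_{i,j,k} A_{i,jk}^ℓ X_{i,jk}`. -/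
noncomputable def ypoly (n : ℕ) (A : Fin n → Fin n → Fin n → Fin n → ℝ) (ℓ : Fin n) :
    MvPolynomial (Fin n × Fin (n+1)) ℝ :=
  ∑ i : Fin n, ∑ j : Fin n, ∑ k : Fin n, A ℓ i j k • Xpoly n i j k

/-!
The translation field `ξ_r` moves row `a` of the matrix of `V` by `δ_{ar}` times the constant last
row. Differentiating `X_{i,jk}` row by row, every term other than that of row `i` is therefore a
determinant with two equal rows or a zero row, and what is left is
`ξ_r X_{i,jk} = (δ_{jr} δ_{ki} + δ_{kr} δ_{ji}) V`. Hence `ξ_r y_ℓ = ∑_i (A_{i,ri}^ℓ + A_{i,ir}^ℓ) V`,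
and the coefficients of `V ≠ 0` can be compared.
-/

section DerivationDet

variable {R A : Type*} [CommSemiring R]

theorem derivation_prod {M ι : Type*} [CommSemiring A] [Algebra R A] [AddCommMonoid M] [Module A M]
    [Module R M] [DecidableEq ι] (D : Derivation R A M) (s : Finset ι) (f : ι → A) :
    D (∏ i ∈ s, f i) = ∑ i ∈ s, (∏ j ∈ s.erase i, f j) • D (f i) := by
  induction s using Finset.induction_on with
  | empty => simp
  | insert a s ha ih =>
    have erase_of_mem (i : ι) (hi : i ∈ s) :
        ∏ j ∈ (insert a s).erase i, f j = f a * ∏ j ∈ s.erase i, f j := by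
      rw [Finset.erase_insert_of_ne (ne_of_mem_of_not_mem hi ha).symm,
        Finset.prod_insert (mt Finset.mem_of_mem_erase ha)]
    rw [Finset.prod_insert ha, D.leibniz, ih, Finset.sum_insert ha, Finset.erase_insert ha,
      add_comm, Finset.smul_sum]
    congr 1
    exact Finset.sum_congr rfl fun i hi => by rw [erase_of_mem i hi, mul_smul]

variable {m : Type*} [CommRing A] [Algebra R A] [Fintype m] [DecidableEq m]

theorem derivation_det (D : Derivation R A A) (M : Matrix m m A) :
    D M.det = ∑ q, (M.updateRow q (D ∘ M q)).det := by
  have prod_updateRow (σ : Equiv.Perm m) (q : m) :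
      (∏ j ∈ Finset.univ.erase q, M j (σ j)) • D (M q (σ q)) =
        ∏ j, M.updateRow q (D ∘ M q) j (σ j) := by
    rw [← Finset.prod_erase_mul _ _ (Finset.mem_univ q), Matrix.updateRow_self]
    congr 1
    exact Finset.prod_congr rfl fun j hj => by
      rw [Matrix.updateRow_ne (Finset.ne_of_mem_erase hj)]
  simp only [← Matrix.det_transpose M, ← Matrix.det_transpose (M.updateRow _ _),
    Matrix.det_apply, Matrix.transpose_apply, Units.smul_def, map_sum, map_zsmul,
    derivation_prod, prod_updateRow, Finset.smul_sum]
  exact Finset.sum_comm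

theorem derivation_det_updateRow_of_constant_row (D : Derivation R A A) {M : Matrix m m A}
    {i p : m} (hpi : p ≠ i) (hp : D ∘ M p = 0) (hM : ∀ q ≠ i, ∃ c : A, D ∘ M q = c • M p)
    (v : m → A) :
    D (M.updateRow i v).det = (M.updateRow i (D ∘ v)).det := by
  rw [derivation_det, Finset.sum_eq_single_of_mem i (Finset.mem_univ i)]
  · rw [Matrix.updateRow_self, Matrix.updateRow_idem]
  · intro q _ hqi
    rw [Matrix.updateRow_ne hqi]
    rcases eq_or_ne q p with rfl | hqp
    · exact Matrix.det_eq_zero_of_row_eq_zero q fun c => by simp [hp]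
    · obtain ⟨c, hc⟩ := hM q hqi
      rw [hc, Matrix.det_updateRow_smul, ← Matrix.updateRow_ne (M := M) (b := v) hpi,
        Matrix.det_updateRow_eq_zero hqp.symm, mul_zero]

end DerivationDet

section TranslationDerivation

open MvPolynomial

variable {R σ τ : Type*} [CommSemiring R] [Fintype τ]

/-- The translation field `ξ_r = ∑ₘ ∂/∂x_r^m`, for variables `x_i^m` indexed by pairs `(i, m)`. -/
noncomputable def translationDerivation (R : Type*) {σ : Type*} (τ : Type*) [CommSemiring R]
    [Fintype τ] (r : σ) : Derivation R (MvPolynomial (σ × τ) R) (MvPolynomial (σ × τ) R) :=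
  ∑ m : τ, pderiv (r, m)

theorem translationDerivation_apply (r : σ) (p : MvPolynomial (σ × τ) R) :
    translationDerivation R τ r p = ∑ m : τ, pderiv (r, m) p := by
  rw [translationDerivation, ← Derivation.coeFnAddMonoidHom_apply, map_sum, Finset.sum_apply]
  rfl

theorem translationDerivation_X [DecidableEq σ] (r a : σ) (c : τ) :
    translationDerivation R τ r (X (a, c)) = if a = r then 1 else 0 := by
  classical
  rw [translationDerivation_apply]
  split_ifs with h <;> simp [pderiv_X, Pi.single_apply, h]

end TranslationDerivation

section BasicDeterminants

open MvPolynomial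

variable {n : ℕ}

theorem Vmat_castSucc (a : Fin n) : Vmat n a.castSucc = fun c => X (a, c) := by
  ext1 c
  simp [Vmat]

theorem Vmat_last : Vmat n (Fin.last n) = 1 := by
  ext1 c
  simp [Vmat]

theorem Xmat_eq_updateRow (i j k : Fin n) :
    Xmat n i j k =
      (Vmat n).updateRow i.castSucc (Vmat n j.castSucc * Vmat n k.castSucc) := by
  ext1 a c
  simp [Xmat, Vmat, Matrix.updateRow_apply, Fin.ext_iff]

theorem Vpoly_ne_zero : Vpoly n ≠ 0 := by
  -- At the standard simplex (vertices `e_1, …, e_n, 0`) the matrix is unitriangular.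
  let simplex : Fin n × Fin (n + 1) → ℝ := fun p => if p.1.castSucc = p.2 then 1 else 0
  have lower : ((eval simplex).mapMatrix (Vmat n)).IsLowerTriangular := by
    intro a b (hab : a < b)
    induction a using Fin.lastCases with
    | last => exact absurd hab (Fin.le_last b).not_gt
    | cast a => simp [simplex, Vmat_castSucc, hab.ne]
  have eval_V : eval simplex (Vpoly n) = 1 := by
    rw [Vpoly, RingHom.map_det, Matrix.det_of_isLowerTriangular _ lower, Fin.prod_univ_castSucc]
    simp [simplex, Vmat_castSucc, Vmat_last]
  intro hV
  simp [hV] at eval_V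

theorem det_Vmat_updateRow_castSucc (i k : Fin n) :
    ((Vmat n).updateRow i.castSucc (Vmat n k.castSucc)).det = kron k i • Vpoly n := by
  rcases eq_or_ne k i with rfl | h
  · simp [kron, Vpoly]
  · rw [Matrix.det_updateRow_eq_zero ((Fin.castSucc_injective n).ne h)]
    simp [kron, h]

theorem translationDerivation_comp_Vmat_castSucc (r a : Fin n) :
    translationDerivation ℝ (Fin (n + 1)) r ∘ Vmat n a.castSucc =
      (C (kron a r) : MvPolynomial (Fin n × Fin (n + 1)) ℝ) • Vmat n (Fin.last n) := by
  ext1 c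
  simp [Vmat_castSucc, Vmat_last, translationDerivation_X, kron, apply_ite C]

theorem translationDerivation_comp_Vmat_last (r : Fin n) :
    translationDerivation ℝ (Fin (n + 1)) r ∘ Vmat n (Fin.last n) = 0 := by
  ext1 c
  simp [Vmat_last]

theorem translationDerivation_comp_Vmat_mul_Vmat (r j k : Fin n) :
    translationDerivation ℝ (Fin (n + 1)) r ∘ (Vmat n j.castSucc * Vmat n k.castSucc) =
      (C (kron j r) : MvPolynomial (Fin n × Fin (n + 1)) ℝ) • Vmat n k.castSucc +
        (C (kron k r) : MvPolynomial (Fin n × Fin (n + 1)) ℝ) • Vmat n j.castSucc := by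
  have row (a : Fin n) (c : Fin (n + 1)) :
      translationDerivation ℝ (Fin (n + 1)) r (Vmat n a.castSucc c) = C (kron a r) := by
    simpa [Vmat_last] using congrFun (translationDerivation_comp_Vmat_castSucc r a) c
  ext1 c
  simp only [Function.comp_apply, Pi.mul_apply, Pi.add_apply, Pi.smul_apply, Derivation.leibniz,
    row, smul_eq_mul]
  ring

theorem translationDerivation_Xpoly (r i j k : Fin n) :
    translationDerivation ℝ (Fin (n + 1)) r (Xpoly n i j k) =
      (kron j r * kron k i + kron k r * kron j i) • Vpoly n := by
  have rows (q : Fin (n + 1)) : ∃ c : MvPolynomial (Fin n × Fin (n + 1)) ℝ,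
      translationDerivation ℝ (Fin (n + 1)) r ∘ Vmat n q = c • Vmat n (Fin.last n) := by
    induction q using Fin.lastCases with
    | last => exact ⟨0, by rw [translationDerivation_comp_Vmat_last, zero_smul]⟩
    | cast a => exact ⟨_, translationDerivation_comp_Vmat_castSucc r a⟩
  rw [Xpoly, Xmat_eq_updateRow,
    derivation_det_updateRow_of_constant_row _ (Fin.castSucc_lt_last i).ne'
      (translationDerivation_comp_Vmat_last r) (fun q _ => rows q),
    translationDerivation_comp_Vmat_mul_Vmat, Matrix.det_updateRow_add,
    Matrix.det_updateRow_smul, Matrix.det_updateRow_smul, det_Vmat_updateRow_castSucc,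
    det_Vmat_updateRow_castSucc, C_mul', C_mul', smul_smul, smul_smul, add_smul]

theorem translationDerivation_ypoly (A : Fin n → Fin n → Fin n → Fin n → ℝ) (ℓ r : Fin n) :
    translationDerivation ℝ (Fin (n + 1)) r (ypoly n A ℓ) =
      (∑ i, (A ℓ i r i + A ℓ i i r)) • Vpoly n := by
  have contract (i : Fin n) :
      ∑ j, ∑ k, A ℓ i j k * (kron j r * kron k i + kron k r * kron j i) =
        A ℓ i r i + A ℓ i i r := by
    simp [kron, mul_add, Finset.sum_add_distrib, Finset.sum_ite_irrel]
  simp only [ypoly, map_sum, Derivation.map_smul, translationDerivation_Xpoly, smul_smul,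
    ← Finset.sum_smul, contract]

end BasicDeterminants

/-- If `ξ_r(y_ℓ) = δ_{ℓr} V` for all `ℓ, r`, then `Σ_i A_{i,ir}^ℓ = (1/2) δ_{ℓr}`. -/
theorem coeff_translation_covariance (n : ℕ) (hn : 1 ≤ n)
    (A : Fin n → Fin n → Fin n → Fin n → ℝ)
    (hA : ∀ ℓ i j k, A ℓ i j k = A ℓ i k j)
    (hy : ∀ ℓ r : Fin n,
      ∑ m : Fin (n+1), MvPolynomial.pderiv (r, m) (ypoly n A ℓ) = kron ℓ r • Vpoly n) :
    ∀ ℓ r : Fin n, ∑ i : Fin n, A ℓ i i r = (1 / 2) * kron ℓ r := by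
  intro ℓ r
  have coeff_eq : ∑ i, (A ℓ i r i + A ℓ i i r) = kron ℓ r := by
    have h := hy ℓ r
    rw [← translationDerivation_apply, translationDerivation_ypoly] at h
    exact smul_left_injective ℝ Vpoly_ne_zero h
  have symm_sum : ∑ i, (A ℓ i r i + A ℓ i i r) = 2 * ∑ i, A ℓ i i r := by
    simp only [hA ℓ _ r, ← two_mul, Finset.mul_sum]
  linarith
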